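/- arXiv:2206.09525 — 7 statements merged into one kernel-verified Lean document; each statement's English description precedes it below -/
import Mathlib

section
/- Let n ≥ 1 and let v₀,…,v_n be n+1 affinely independent points of ℝⁿ with barycentric coordinates λ₀,…,λ_n. Let α ∈ ℕ^{n+1} be a multi-index, let f be a nonempty proper subset of {0,…,n}, and let x ∈ ℝⁿ satisfy λ_i(x) = 0 for every i ∉ f. Then for every multi-index β ∈ ℕⁿ (encoding iterated partial derivatives in the standard coordinate directions of ℝⁿ) with |β| < Σ_{i∉f} α_i, the partial derivative ∂^β(λ^α) vanishes at x. In other words, the Bernstein polynomial λ^α vanishes on the sub-simplex f to order dist(α,f) = Σ_{i∉f} α_i. -/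
open scoped BigOperators

/-!
By the Leibniz rule, the order to which a function vanishes at a point is additive under products:
every term `Dⁱg · Dᵐ⁻ⁱh` of `Dᵐ(g h)` with `m < k + l` has `i < k` or `m - i < l`. On the
sub-simplex `f` each `λ_i` with `i ∉ f` vanishes to order at least one, so `λ^α` vanishes there to
order at least `∑_{i ∉ f} α_i`.
-/

section Smoothness

variable {𝕜 E : Type*} [NontriviallyNormedField 𝕜] [NormedAddCommGroup E] [NormedSpace 𝕜 E]

theorem contDiff_affineMap_of_finiteDimensional [CompleteSpace 𝕜] [FiniteDimensional 𝕜 E]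
    {F : Type*} [NormedAddCommGroup F] [NormedSpace 𝕜 F] {n : WithTop ℕ∞} (g : E →ᵃ[𝕜] F) :
    ContDiff 𝕜 n g :=
  ContinuousAffineMap.contDiff ⟨g, g.continuous_of_finiteDimensional⟩

theorem norm_iteratedFDeriv_mul_le_of_contDiffAt {A : Type*} [NormedRing A] [NormedAlgebra 𝕜 A]
    {g h : E → A} {x : E} {m : ℕ} (hg : ContDiffAt 𝕜 m g x) (hh : ContDiffAt 𝕜 m h x) :
    ‖iteratedFDeriv 𝕜 m (fun y => g y * h y) x‖ ≤ ∑ i ∈ Finset.range (m + 1),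
      (m.choose i : ℝ) * ‖iteratedFDeriv 𝕜 i g x‖ * ‖iteratedFDeriv 𝕜 (m - i) h x‖ := by
  obtain ⟨u, ⟨hu, hxu⟩, hgu, hhu⟩ :
      ∃ u, (IsOpen u ∧ x ∈ u) ∧ ContDiffOn 𝕜 m g u ∧ ContDiffOn 𝕜 m h u := by
    have hgh := (hg.eventually (by simp)).and (hh.eventually (by simp))
    obtain ⟨u, hu, hou, hxu⟩ := mem_nhds_iff.mp hgh
    exact ⟨u, ⟨hou, hxu⟩, fun y hy => (hu hy).1.contDiffWithinAt,
      fun y hy => (hu hy).2.contDiffWithinAt⟩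
  simpa only [iteratedFDerivWithin_of_isOpen _ hu hxu] using
    norm_iteratedFDerivWithin_mul_le hgu hhu hu.uniqueDiffOn hxu le_rfl

end Smoothness

/-- Vanishing to order (at least) `k` at `x`, for functions that are `C^n` at `x`. Only derivatives
of order at most `n` are constrained, so that the class `C^n` can be kept fixed while the orders `k`
of the factors of a product add up. -/
structure VanishesToOrderAt (𝕜 : Type*) {E F : Type*} [NontriviallyNormedField 𝕜]
    [NormedAddCommGroup E] [NormedSpace 𝕜 E] [NormedAddCommGroup F] [NormedSpace 𝕜 F]
    (n : WithTop ℕ∞) (g : E → F) (x : E) (k : ℕ) : Prop where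
  contDiffAt : ContDiffAt 𝕜 n g x
  iteratedFDeriv_eq_zero : ∀ m : ℕ, m ≤ n → m < k → iteratedFDeriv 𝕜 m g x = 0

namespace VanishesToOrderAt

variable {𝕜 E : Type*} [NontriviallyNormedField 𝕜] [NormedAddCommGroup E] [NormedSpace 𝕜 E]
  {n : WithTop ℕ∞} {x : E} {k l : ℕ}

section NormedSpace

variable {F : Type*} [NormedAddCommGroup F] [NormedSpace 𝕜 F] {g : E → F}

theorem of_contDiffAt (hg : ContDiffAt 𝕜 n g x) : VanishesToOrderAt 𝕜 n g x 0 :=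
  ⟨hg, fun m _ hm => absurd hm m.not_lt_zero⟩

theorem of_apply_eq_zero (hg : ContDiffAt 𝕜 n g x) (hx : g x = 0) :
    VanishesToOrderAt 𝕜 n g x 1 := by
  refine ⟨hg, fun m _ hm => ?_⟩
  obtain rfl : m = 0 := Nat.lt_one_iff.mp hm
  ext
  simpa using hx

end NormedSpace

section NormedRing

variable {A : Type*} [NormedRing A] [NormedAlgebra 𝕜 A] {g h : E → A}

theorem mul (hg : VanishesToOrderAt 𝕜 n g x k) (hh : VanishesToOrderAt 𝕜 n h x l) :
    VanishesToOrderAt 𝕜 n (fun y => g y * h y) x (k + l) := by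
  refine ⟨hg.contDiffAt.mul hh.contDiffAt, fun m hmn hm => norm_le_zero_iff.mp ?_⟩
  refine (norm_iteratedFDeriv_mul_le_of_contDiffAt (hg.contDiffAt.of_le hmn)
    (hh.contDiffAt.of_le hmn)).trans (Finset.sum_eq_zero fun i hi => ?_).le
  have him : i ≤ m := Finset.mem_range_succ_iff.mp hi
  obtain hik | hil : i < k ∨ m - i < l := by omega
  · have hin : (i : WithTop ℕ∞) ≤ n := le_trans (mod_cast him) hmn
    simp [hg.iteratedFDeriv_eq_zero i hin hik]
  · have hin : ((m - i : ℕ) : WithTop ℕ∞) ≤ n := le_trans (mod_cast m.sub_le i) hmn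
    simp [hh.iteratedFDeriv_eq_zero (m - i) hin hil]

theorem pow (hg : VanishesToOrderAt 𝕜 n g x k) (a : ℕ) :
    VanishesToOrderAt 𝕜 n (fun y => g y ^ a) x (a * k) := by
  induction a with
  | zero => simpa using of_contDiffAt (contDiffAt_const (c := (1 : A)))
  | succ a ih => simpa only [pow_succ, Nat.succ_mul] using ih.mul hg

end NormedRing

variable {A ι : Type*} [NormedCommRing A] [NormedAlgebra 𝕜 A] {g : ι → E → A}

theorem prod {s : Finset ι} {k : ι → ℕ} (hg : ∀ i ∈ s, VanishesToOrderAt 𝕜 n (g i) x (k i)) :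
    VanishesToOrderAt 𝕜 n (fun y => ∏ i ∈ s, g i y) x (∑ i ∈ s, k i) := by
  induction s using Finset.cons_induction with
  | empty => simpa using of_contDiffAt (contDiffAt_const (c := (1 : A)))
  | cons i s hi ih =>
    simp only [Finset.sum_cons, Finset.prod_cons]
    exact (hg i (Finset.mem_cons_self i s)).mul
      (ih fun j hj => hg j (Finset.mem_cons_of_mem hj))

theorem prod_pow {s t : Finset ι} (hts : t ⊆ s) (hg : ∀ i ∈ s, ContDiffAt 𝕜 n (g i) x)
    (hx : ∀ i ∈ t, g i x = 0) (α : ι → ℕ) :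
    VanishesToOrderAt 𝕜 n (fun y => ∏ i ∈ s, g i y ^ α i) x (∑ i ∈ t, α i) := by
  classical
  have hrest : VanishesToOrderAt 𝕜 n (fun y => ∏ i ∈ s \ t, g i y ^ α i) x 0 :=
    of_contDiffAt <| contDiffAt_prod fun i hi => (hg i (Finset.sdiff_subset hi)).pow (α i)
  have hvan : VanishesToOrderAt 𝕜 n (fun y => ∏ i ∈ t, g i y ^ α i) x (∑ i ∈ t, α i * 1) :=
    prod fun i hi => (of_apply_eq_zero (hg i (hts hi)) (hx i hi)).pow (α i)
  simpa only [Finset.prod_sdiff hts, mul_one, zero_add] using hrest.mul hvan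

end VanishesToOrderAt

theorem bernstein_vanishes_on_subsimplex_general {𝕜 E A ι : Type*} [NontriviallyNormedField 𝕜]
    [NormedAddCommGroup E] [NormedSpace 𝕜 E] [NormedCommRing A] [NormedAlgebra 𝕜 A]
    {g : ι → E → A} {x : E} {s t : Finset ι} (hts : t ⊆ s) (α : ι → ℕ) {m : ℕ}
    (hg : ∀ i ∈ s, ContDiffAt 𝕜 m (g i) x) (hx : ∀ i ∈ t, g i x = 0) (hm : m < ∑ i ∈ t, α i) :
    iteratedFDeriv 𝕜 m (fun y => ∏ i ∈ s, g i y ^ α i) x = 0 :=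
  (VanishesToOrderAt.prod_pow hts hg hx α).iteratedFDeriv_eq_zero m le_rfl hm

/-- A Bernstein polynomial `λ^α` vanishes on the sub-simplex `f` to order
`dist(α, f) = ∑_{i ∉ f} α_i`: every iterated partial derivative (in standard coordinate
directions) of order `< dist(α,f)` vanishes at any point `x` of the sub-simplex `f`. -/
theorem bernstein_vanishes_on_subsimplex
    (n : ℕ) (hn : 1 ≤ n)
    (v : Fin (n + 1) → (Fin n → ℝ)) (hv : AffineIndependent ℝ v)
    (lam : Fin (n + 1) → ((Fin n → ℝ) →ᵃ[ℝ] ℝ))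
    (hlam : ∀ i j, lam i (v j) = if i = j then 1 else 0)
    (hsum : ∀ x : Fin n → ℝ, ∑ i, lam i x = 1)
    (α : Fin (n + 1) → ℕ)
    (f : Finset (Fin (n + 1))) (hf1 : f.Nonempty) (hf2 : f ≠ Finset.univ)
    (x : Fin n → ℝ) (hx : ∀ i ∉ f, lam i x = 0)
    (m : ℕ) (hm : m < ∑ i ∈ fᶜ, α i)
    (d : Fin m → Fin n) :
    iteratedFDeriv ℝ m (fun y => ∏ i, (lam i y) ^ (α i)) x
      (fun j => Pi.single (d j) 1) = 0 := by
  rw [bernstein_vanishes_on_subsimplex_general (Finset.subset_univ fᶜ) α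
    (fun i _ => (contDiff_affineMap_of_finiteDimensional (lam i)).contDiffAt)
    (fun i hi => hx i (Finset.mem_compl.mp hi)) hm, zero_apply]
end

section
/- Let n ≥ 1 and let α = (α₀,α₁,…,α_n) ∈ ℕ^{n+1}. Then the Lebesgue integral over the standard n-simplex Δⁿ = {x ∈ ℝⁿ : x_i ≥ 0 for all i, x₁+⋯+x_n ≤ 1} of the function x ↦ (∏_{i=1}^n x_i^{α_i})·(1 − x₁ − ⋯ − x_n)^{α₀} equals (α₀!·α₁!⋯α_n!)/(n+|α|)!, where |α| = α₀+⋯+α_n. Equivalently, for the barycentric monomial λ^α of degree k = |α| on a simplex T one has ∫_T λ^α/α! dx = n!·|T|/(k+n)!. -/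
open scoped BigOperators
open MeasureTheory

/-!
Slicing the simplex of side `c` at the value `t` of one coordinate gives a simplex of side `c - t`
in one dimension less. By Fubini the Dirichlet integral is therefore a one-dimensional integral of
`t ^ a * (c - t) ^ m`, up to a constant, and Euler's Beta integral closes an induction on the
dimension. The side has to vary in this induction, so it cannot be fixed to `1` from the start.
-/

lemma integral_pow_mul_one_sub_pow (a b : ℕ) :
    ∫ t in (0 : ℝ)..1, t ^ a * (1 - t) ^ b =
      (a.factorial * b.factorial : ℝ) / (a + b + 1).factorial := by
  have hB := Complex.betaIntegral_eq_Gamma_mul_div (a + 1) (b + 1)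
    (by norm_cast; positivity) (by norm_cast; positivity)
  have hadd : (a + 1 + (b + 1) : ℂ) = (a + b + 1 : ℕ) + 1 := by push_cast; ring
  rw [hadd, Complex.Gamma_nat_eq_factorial, Complex.Gamma_nat_eq_factorial,
    Complex.Gamma_nat_eq_factorial] at hB
  simp only [Complex.betaIntegral, add_sub_cancel_right, Complex.cpow_natCast] at hB
  apply Complex.ofReal_injective
  rw [← intervalIntegral.integral_ofReal]
  push_cast
  exact hB

lemma integral_pow_mul_sub_pow (c : ℝ) (a b : ℕ) :
    ∫ t in (0 : ℝ)..c, t ^ a * (c - t) ^ b =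
      (a.factorial * b.factorial : ℝ) / (a + b + 1).factorial * c ^ (a + b + 1) := by
  calc ∫ t in (0 : ℝ)..c, t ^ a * (c - t) ^ b
      = c * ∫ s in (0 : ℝ)..1, (s * c) ^ a * (c - s * c) ^ b := by
        simpa only [zero_mul, one_mul, smul_eq_mul] using
          (intervalIntegral.smul_integral_comp_mul_right (a := 0) (b := 1)
            (fun t : ℝ => t ^ a * (c - t) ^ b) c).symm
    _ = c * ∫ s in (0 : ℝ)..1, c ^ (a + b) * (s ^ a * (1 - s) ^ b) := by
        congr 2 with s
        rw [← one_sub_mul, mul_pow, mul_pow]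
        ring
    _ = (a.factorial * b.factorial : ℝ) / (a + b + 1).factorial * c ^ (a + b + 1) := by
        rw [intervalIntegral.integral_const_mul, integral_pow_mul_one_sub_pow]
        ring

lemma integral_pi_eq_integral_insertNth {n : ℕ} {X : Fin (n + 1) → Type*}
    [∀ i, MeasurableSpace (X i)] (μ : ∀ i, Measure (X i)) [∀ i, SigmaFinite (μ i)]
    {E : Type*} [NormedAddCommGroup E] [NormedSpace ℝ E] (p : Fin (n + 1))
    {f : (∀ i, X i) → E} (hf : Integrable f (Measure.pi μ)) :
    ∫ x, f x ∂Measure.pi μ =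
      ∫ t, ∫ y, f (p.insertNth t y) ∂Measure.pi (fun j => μ (p.succAbove j)) ∂μ p := by
  have hmp := (measurePreserving_piFinSuccAbove μ p).symm
  rw [← hmp.integral_comp']
  exact integral_prod _ (hmp.integrable_comp_of_integrable hf)

/-- The full-dimensional simplex of side `c`, with vertices `0` and `c • eᵢ`: the domain of the
Dirichlet integral. Unlike in `stdSimplex`, the coordinate sum is only bounded, by `c`. The set is
empty for `c < 0`. -/
def solidSimplex (ι : Type*) [Fintype ι] (c : ℝ) : Set (ι → ℝ) :=
  {x | (∀ i, 0 ≤ x i) ∧ ∑ i, x i ≤ c}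

lemma isCompact_solidSimplex (ι : Type*) [Fintype ι] (c : ℝ) : IsCompact (solidSimplex ι c) := by
  have hsub : solidSimplex ι c ⊆ Set.Icc 0 (fun _ => c) := fun x ⟨h0, h1⟩ =>
    ⟨h0, fun i => (Finset.single_le_sum (fun j _ => h0 j) (Finset.mem_univ i)).trans h1⟩
  have hclosed : IsClosed (solidSimplex ι c) :=
    (isClosed_Ici (a := (0 : ι → ℝ))).inter
      (isClosed_le (continuous_finsetSum _ fun i _ => continuous_apply i) continuous_const)
  exact isCompact_Icc.of_isClosed_subset hclosed hsub

lemma measurableSet_solidSimplex (ι : Type*) [Fintype ι] (c : ℝ) :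
    MeasurableSet (solidSimplex ι c) :=
  (isCompact_solidSimplex ι c).measurableSet

lemma insertNth_mem_solidSimplex_iff {n : ℕ} {c t : ℝ} (p : Fin (n + 1)) {y : Fin n → ℝ} :
    p.insertNth t y ∈ solidSimplex (Fin (n + 1)) c ↔
      t ∈ Set.Icc 0 c ∧ y ∈ solidSimplex (Fin n) (c - t) := by
  simp only [solidSimplex, Set.mem_ofPred_eq, Fin.forall_iff_succAbove p,
    Fin.sum_univ_succAbove _ p, Fin.insertNth_apply_same, Fin.insertNth_apply_succAbove,
    Set.mem_Icc, le_sub_iff_add_le']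
  constructor
  · rintro ⟨⟨ht, hy⟩, hsum⟩
    have htc : t ≤ c := (le_add_of_nonneg_right (Finset.sum_nonneg fun i _ => hy i)).trans hsum
    exact ⟨⟨ht, htc⟩, hy, hsum⟩
  · rintro ⟨⟨ht, -⟩, hy, hsum⟩
    exact ⟨⟨ht, hy⟩, hsum⟩

lemma setIntegral_solidSimplex_succ {n : ℕ} {c : ℝ} {E : Type*} [NormedAddCommGroup E]
    [NormedSpace ℝ E] (p : Fin (n + 1)) {f : (Fin (n + 1) → ℝ) → E}
    (hf : IntegrableOn f (solidSimplex (Fin (n + 1)) c)) :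
    ∫ x in solidSimplex (Fin (n + 1)) c, f x =
      ∫ t in Set.Icc 0 c, ∫ y in solidSimplex (Fin n) (c - t), f (p.insertNth t y) := by
  have hS := measurableSet_solidSimplex (Fin (n + 1)) c
  have hslice (t : ℝ) (y : Fin n → ℝ) :
      (solidSimplex (Fin (n + 1)) c).indicator f (p.insertNth t y) =
        (Set.Icc 0 c).indicator (fun t => (solidSimplex (Fin n) (c - t)).indicator
          (fun y => f (p.insertNth t y)) y) t := by
    classical
    simp only [Set.indicator_apply, insertNth_mem_solidSimplex_iff, ite_and]
  calc ∫ x in solidSimplex (Fin (n + 1)) c, f x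
      = ∫ x, (solidSimplex (Fin (n + 1)) c).indicator f x := (integral_indicator hS).symm
    _ = ∫ t, ∫ y : Fin n → ℝ, (solidSimplex (Fin (n + 1)) c).indicator f (p.insertNth t y) :=
        integral_pi_eq_integral_insertNth (fun _ => volume) p ((integrable_indicator_iff hS).2 hf)
    _ = ∫ t, (Set.Icc 0 c).indicator
          (fun t => ∫ y in solidSimplex (Fin n) (c - t), f (p.insertNth t y)) t := by
        congr 1 with t
        simp only [hslice]
        by_cases ht : t ∈ Set.Icc 0 c
        · simp only [Set.indicator_of_mem ht,
            integral_indicator (measurableSet_solidSimplex (Fin n) (c - t))]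
        · simp only [Set.indicator_of_notMem ht, integral_zero]
    _ = ∫ t in Set.Icc 0 c, ∫ y in solidSimplex (Fin n) (c - t), f (p.insertNth t y) :=
        integral_indicator measurableSet_Icc

lemma setIntegral_solidSimplex_prod_pow_mul_sub_sum_pow (n : ℕ) {c : ℝ} (hc : 0 ≤ c)
    (a : Fin n → ℕ) (b : ℕ) :
    ∫ x in solidSimplex (Fin n) c, (∏ i, x i ^ a i) * (c - ∑ i, x i) ^ b =
      (∏ i, ((a i).factorial : ℝ)) * b.factorial / (n + ∑ i, a i + b).factorial *
        c ^ (n + ∑ i, a i + b) := by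
  induction n generalizing c with
  | zero =>
    have hb : (b.factorial : ℝ) ≠ 0 := by positivity
    simp [solidSimplex, hc, Measure.volume_pi_eq_dirac 0, hb]
  | succ n ih =>
    set m := n + ∑ i : Fin n, a i.succ + b
    set K : ℝ := (∏ i : Fin n, ((a i.succ).factorial : ℝ)) * b.factorial / m.factorial
    have hslice : ∀ t ∈ Set.Icc 0 c, ∫ y in solidSimplex (Fin n) (c - t),
        t ^ a 0 * (∏ i, y i ^ a i.succ) * (c - (t + ∑ i, y i)) ^ b =
          K * (t ^ a 0 * (c - t) ^ m) := fun t ht => by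
      simp only [mul_assoc, ← sub_sub]
      rw [integral_const_mul, ih (sub_nonneg.2 ht.2)]
      ring
    have hcont : Continuous fun x : Fin (n + 1) → ℝ => (∏ i, x i ^ a i) * (c - ∑ i, x i) ^ b := by
      fun_prop
    have hm : (m.factorial : ℝ) ≠ 0 := by positivity
    have hexp : n + 1 + (a 0 + ∑ i : Fin n, a i.succ) + b = a 0 + m + 1 := by ring
    calc ∫ x in solidSimplex (Fin (n + 1)) c, (∏ i, x i ^ a i) * (c - ∑ i, x i) ^ b
        = ∫ t in Set.Icc 0 c, ∫ y in solidSimplex (Fin n) (c - t),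
            t ^ a 0 * (∏ i, y i ^ a i.succ) * (c - (t + ∑ i, y i)) ^ b := by
          rw [setIntegral_solidSimplex_succ 0
            (hcont.continuousOn.integrableOn_compact (isCompact_solidSimplex _ c))]
          simp only [Fin.prod_univ_succ, Fin.sum_univ_succ, Fin.insertNth_zero', Fin.cons_zero,
            Fin.cons_succ]
      _ = ∫ t in Set.Icc 0 c, K * (t ^ a 0 * (c - t) ^ m) :=
          setIntegral_congr_fun measurableSet_Icc hslice
      _ = K * ∫ t in (0 : ℝ)..c, t ^ a 0 * (c - t) ^ m := by
          rw [integral_const_mul, integral_Icc_eq_integral_Ioc, intervalIntegral.integral_of_le hc]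
      _ = _ := by
          rw [integral_pow_mul_sub_pow, Fin.prod_univ_succ, Fin.sum_univ_succ, hexp]
          simp only [K]
          field_simp

/-- integral of a barycentric monomial over the standard `n`-simplex:
`∫_{Δⁿ} (∏_{i=1}^n x_i^{α_i}) (1 - x₁ - ⋯ - x_n)^{α₀} dx = α! / (n + |α|)!`. -/
theorem integral_bernstein_standard_simplex
    (n : ℕ) (hn : 1 ≤ n) (α : Fin (n + 1) → ℕ) :
    (∫ x in {x : Fin n → ℝ | (∀ i, 0 ≤ x i) ∧ ∑ i, x i ≤ 1},
        (∏ i : Fin n, (x i) ^ (α i.succ)) * (1 - ∑ i, x i) ^ (α 0)) =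
      (∏ i, (Nat.factorial (α i) : ℝ)) / (Nat.factorial (n + ∑ i, α i) : ℝ) := by
  have hDirichlet := setIntegral_solidSimplex_prod_pow_mul_sub_sum_pow n zero_le_one
    (fun i => α i.succ) (α 0)
  rw [one_pow, mul_one] at hDirichlet
  rw [Fin.prod_univ_succ, Fin.sum_univ_succ, mul_comm, add_comm (α 0), ← add_assoc]
  exact hDirichlet
end

section
/- Let n ≥ 1, let v₀,…,v_n be n+1 affinely independent points of ℝⁿ with barycentric coordinates λ₀,…,λ_n, let α ∈ ℕ^{n+1}, and let 0 ≤ i ≠ j ≤ n. Write t_{j,i} = v_i − v_j and ε_i for the i-th unit multi-index. Then, as functions on ℝⁿ, the directional derivative of λ^{α+ε_i} along t_{j,i} satisfies ∇(λ^{α+ε_i})·t_{j,i} = (α_i+1)·λ^α − α_j·λ^{α+ε_i−ε_j}, where for α_j = 0 the second term is interpreted as 0. -/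
open scoped BigOperators

section ProdPow

variable {ι : Type*} [DecidableEq ι] {u : Finset ι}

lemma prod_pow_sub_single {M : Type*} [CommMonoid M] {i : ι} (hi : i ∈ u) (f : ι → M)
    (β : ι → ℕ) :
    ∏ m ∈ u, f m ^ (β - Pi.single i 1 : ι → ℕ) m
      = f i ^ (β i - 1) * ∏ m ∈ u.erase i, f m ^ β m := by
  rw [← Finset.mul_prod_erase u _ hi]
  congr 1
  · simp
  · exact Finset.prod_congr rfl fun m hm => by simp [Finset.ne_of_mem_erase hm]

/-- Where `β i = 0`, the truncated exponent `β - Pi.single i 1` is harmless because the coefficient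
`β i` kills the term. -/
lemma hasFDerivAt_finsetProd_pow {𝕜 E A : Type*} [NontriviallyNormedField 𝕜] [NormedAddCommGroup E]
    [NormedSpace 𝕜 E] [NormedCommRing A] [NormedAlgebra 𝕜 A] {f : ι → E → A}
    {f' : ι → E →L[𝕜] A} {x : E} (hf : ∀ i ∈ u, HasFDerivAt (f i) (f' i) x) (β : ι → ℕ) :
    HasFDerivAt (fun y => ∏ i ∈ u, f i y ^ β i)
      (∑ i ∈ u, (β i • ∏ m ∈ u, f m x ^ (β - Pi.single i 1 : ι → ℕ) m) • f' i) x := by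
  refine (HasFDerivAt.finsetProd fun i hi => (hf i hi).pow (β i)).congr_fderiv ?_
  refine Finset.sum_congr rfl fun i hi => ?_
  rw [prod_pow_sub_single hi, smul_smul, mul_smul_comm, mul_comm]

end ProdPow

theorem directional_deriv_bernstein_general {𝕜 E ι : Type*} [NontriviallyNormedField 𝕜]
    [NormedAddCommGroup E] [NormedSpace 𝕜 E] [Fintype ι] [DecidableEq ι] (v : ι → E)
    (lam : ι → E →ᴬ[𝕜] 𝕜) (hlam : ∀ i j, lam i (v j) = if i = j then 1 else 0)
    (α : ι → ℕ) {i j : ι} (hij : i ≠ j) (x : E) :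
    fderiv 𝕜 (fun y => ∏ ℓ, lam ℓ y ^ (α + Pi.single i 1 : ι → ℕ) ℓ) x (v i - v j)
      = (α i + 1) * ∏ ℓ, lam ℓ x ^ α ℓ
        - α j * ∏ ℓ, lam ℓ x ^ (α + Pi.single i 1 - Pi.single j 1 : ι → ℕ) ℓ := by
  have contLinear_edge (ℓ : ι) : (lam ℓ).contLinear (v i - v j)
      = (if ℓ = i then 1 else 0) - if ℓ = j then 1 else 0 := by
    rw [← vsub_eq_sub, ContinuousAffineMap.contLinear_map_vsub, vsub_eq_sub, hlam, hlam]
  rw [(hasFDerivAt_finsetProd_pow (fun ℓ _ => (lam ℓ).hasFDerivAt) (α + Pi.single i 1)).fderiv]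
  -- Only the terms `ℓ = i` and `ℓ = j` of the Leibniz sum survive.
  simp [contLinear_edge, mul_sub, Finset.sum_sub_distrib, hij.symm]

/-- `∇(λ^{α+ε_i}) ⋅ t_{j,i} = (α_i + 1) λ^α − α_j λ^{α+ε_i−ε_j}`,
where `t_{j,i} = v_i − v_j` and `ε_i` is the `i`-th unit multi-index
(with truncated subtraction in the exponent, the second term being killed by the
coefficient `α_j` when `α_j = 0`). -/
theorem directional_deriv_bernstein
    (n : ℕ) (hn : 1 ≤ n)
    (v : Fin (n + 1) → (Fin n → ℝ)) (hv : AffineIndependent ℝ v)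
    (lam : Fin (n + 1) → ((Fin n → ℝ) →ᵃ[ℝ] ℝ))
    (hlam : ∀ i j, lam i (v j) = if i = j then 1 else 0)
    (hsum : ∀ x : Fin n → ℝ, ∑ i, lam i x = 1)
    (α : Fin (n + 1) → ℕ) (i j : Fin (n + 1)) (hij : i ≠ j)
    (x : Fin n → ℝ) :
    fderiv ℝ (fun y => ∏ ℓ, (lam ℓ y) ^ (α ℓ + if ℓ = i then 1 else 0)) x (v i - v j)
      = ((α i : ℝ) + 1) * ∏ ℓ, (lam ℓ x) ^ (α ℓ)
        - (α j : ℝ) * ∏ ℓ, (lam ℓ x) ^ ((α ℓ + if ℓ = i then 1 else 0)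
            - if ℓ = j then 1 else 0) := by
  simpa [Pi.single_apply] using directional_deriv_bernstein_general v
    (fun ℓ => ⟨lam ℓ, (lam ℓ).continuous_of_finiteDimensional⟩) hlam α hij x
end

section
/- Let n ≥ 1, k ≥ 0, and let T ⊂ ℝⁿ be the simplex with affinely independent vertices v₀,…,v_n, with barycentric coordinates λ₀,…,λ_n. Then the space of real polynomial functions on ℝⁿ of total degree at most k whose Lebesgue integral over T vanishes equals the real span of the set {λ^α/α! − λ^β/β! : α, β ∈ 𝕋ⁿ_k with Σ_i |α_i − β_i| = 2}. -/
open scoped BigOperators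
open MeasureTheory

/-!
Let `T` be the simplex. The zero extension of `λ^α / α!` from `T` is the product of the truncated
powers `(λ_l)₊ ^ α_l / α_l!`. Along the edge direction `v i - v j` the coordinate `λ_i` grows and
`λ_j` decreases at unit speed, so the extension of index `γ + e_i + e_j` is continuous and, off two
points of each line, has derivative equal to the extension of index `γ + e_j` minus that of index
`γ + e_i`. By translation invariance such a derivative has integral zero, whence `λ^(γ + e_i)` and
`λ^(γ + e_j)`, divided by their factorials, have the same integral over `T`. Unit steps connect the
lattice, so all the scaled monomials of degree `k` have one common, positive, integral. Since they
span the polynomials of degree at most `k`, the polynomials of integral zero are exactly the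
direction of their affine span, which is spanned by the differences over unit steps.
-/

open scoped Pointwise

section SimplicialLattice

/-- The simplicial lattice of multi-indices `α` with `|α| = k`; the lattice `𝕋ⁿ_k` is the case
`ι = Fin (n + 1)`. -/
def simplicialLattice (ι : Type*) [Fintype ι] (k : ℕ) : Set (ι → ℕ) := {α | ∑ i, α i = k}

variable {ι : Type*} [Fintype ι] [DecidableEq ι] {k : ℕ} {γ : ι → ℕ}

theorem add_single_mem_simplicialLattice_iff {i : ι} :
    γ + Pi.single i 1 ∈ simplicialLattice ι k ↔ ∑ l, γ l + 1 = k := by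
  simp [simplicialLattice, Finset.sum_add_distrib]

theorem exists_eq_add_single_of_mem_simplicialLattice_succ {α : ι → ℕ}
    (hα : α ∈ simplicialLattice ι (k + 1)) :
    ∃ γ ∈ simplicialLattice ι k, ∃ i, α = γ + Pi.single i 1 := by
  obtain ⟨i, -, hi⟩ : ∃ i ∈ Finset.univ, α i ≠ 0 :=
    Finset.exists_ne_zero_of_sum_ne_zero (hα.trans_ne k.succ_ne_zero)
  have hle : Pi.single i 1 ≤ α :=
    update_le_iff.2 ⟨Nat.one_le_iff_ne_zero.2 hi, fun _ _ => Nat.zero_le _⟩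
  refine ⟨α - Pi.single i 1, ?_, i, (tsub_add_cancel_of_le hle).symm⟩
  rw [← tsub_add_cancel_of_le hle, add_single_mem_simplicialLattice_iff] at hα
  exact Nat.succ.inj hα

theorem eq_of_forall_add_single_eq {X : Type*} {g : (ι → ℕ) → X}
    (hg : ∀ (γ : ι → ℕ) (i j : ι), γ + Pi.single i 1 ∈ simplicialLattice ι k →
      g (γ + Pi.single i 1) = g (γ + Pi.single j 1))
    {α β : ι → ℕ} (hα : α ∈ simplicialLattice ι k) (hβ : β ∈ simplicialLattice ι k) :
    g α = g β := by
  induction k generalizing g α β with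
  | zero =>
    have eq_zero {α : ι → ℕ} (hα : α ∈ simplicialLattice ι 0) : α = 0 :=
      funext fun i => Finset.sum_eq_zero_iff.1 hα i (Finset.mem_univ i)
    rw [eq_zero hα, eq_zero hβ]
  | succ k ih =>
    obtain ⟨γ, hγ, i, rfl⟩ := exists_eq_add_single_of_mem_simplicialLattice_succ hα
    obtain ⟨δ, hδ, j, rfl⟩ := exists_eq_add_single_of_mem_simplicialLattice_succ hβ
    rw [hg γ i j hα]
    refine ih (g := fun γ => g (γ + Pi.single j 1)) (fun γ a b h => ?_) hγ hδ
    have hγ' : γ + Pi.single j 1 + Pi.single a 1 ∈ simplicialLattice ι (k + 1) := by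
      rw [add_right_comm]
      exact add_single_mem_simplicialLattice_iff.2 (congrArg (· + 1) h)
    simpa only [add_right_comm _ (Pi.single j 1)] using hg _ a b hγ'

theorem sum_natAbs_add_single_sub_add_single (γ : ι → ℕ) {i j : ι} (hij : i ≠ j) :
    ∑ l, (((γ + Pi.single i 1 : ι → ℕ) l : ℤ) - ((γ + Pi.single j 1 : ι → ℕ) l : ℤ)).natAbs =
      2 := by
  have h (l : ι) :
      (((γ + Pi.single i 1 : ι → ℕ) l : ℤ) - ((γ + Pi.single j 1 : ι → ℕ) l : ℤ)).natAbs =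
        (Pi.single i 1 : ι → ℕ) l + (Pi.single j 1 : ι → ℕ) l := by
    rcases eq_or_ne l i with rfl | hi
    · simp [hij]
    · rcases eq_or_ne l j with rfl | hj <;> simp [*]
  simp only [h, Finset.sum_add_distrib, Finset.sum_pi_single', Finset.mem_univ, if_true]

end SimplicialLattice

theorem vectorSpan_image_simplicialLattice (K : Type*) {V ι : Type*} [Ring K] [AddCommGroup V]
    [Module K V] [Fintype ι] {k : ℕ} (f : (ι → ℕ) → V) :
    vectorSpan K (f '' simplicialLattice ι k) =
      Submodule.span K {g | ∃ α β, α ∈ simplicialLattice ι k ∧ β ∈ simplicialLattice ι k ∧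
        ∑ i, ((α i : ℤ) - (β i : ℤ)).natAbs = 2 ∧ g = f α - f β} := by
  classical
  apply le_antisymm
  · rw [vectorSpan_def, Submodule.span_le]
    rintro _ ⟨_, ⟨α, hα, rfl⟩, _, ⟨β, hβ, rfl⟩, rfl⟩
    refine (Submodule.Quotient.eq _).1 (eq_of_forall_add_single_eq
      (g := fun α => Submodule.Quotient.mk (f α)) (fun γ i j h => ?_) hα hβ)
    obtain rfl | hij := eq_or_ne i j
    · rfl
    · refine (Submodule.Quotient.eq _).2 (Submodule.subset_span ⟨_, _, h, ?_,
        sum_natAbs_add_single_sub_add_single γ hij, rfl⟩)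
      rwa [add_single_mem_simplicialLattice_iff] at h ⊢
  · rw [Submodule.span_le]
    rintro _ ⟨α, β, hα, hβ, -, rfl⟩
    exact vsub_mem_vectorSpan K (Set.mem_image_of_mem f hα) (Set.mem_image_of_mem f hβ)

theorem vectorSpan_eq_span_inf_ker {K V : Type*} [Field K] [AddCommGroup V] [Module K V]
    {s : Set V} {φ : V →ₗ[K] K} (hne : ∀ x ∈ s, φ x ≠ 0) (hconst : ∀ x ∈ s, ∀ y ∈ s, φ x = φ y) :
    vectorSpan K s = Submodule.span K s ⊓ LinearMap.ker φ := by
  apply le_antisymm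
  · rw [vectorSpan_def, Submodule.span_le]
    rintro _ ⟨x, hx, y, hy, rfl⟩
    refine ⟨Submodule.sub_mem _ (Submodule.subset_span hx) (Submodule.subset_span hy), ?_⟩
    exact LinearMap.sub_mem_ker_iff.2 (hconst x hx y hy)
  · rintro x ⟨hx, hφx⟩
    obtain rfl | ⟨p, hp⟩ := s.eq_empty_or_nonempty
    · simpa using hx
    · let proj : V →ₗ[K] V := LinearMap.id - ((φ p)⁻¹ • φ).smulRight p
      have hproj : Submodule.span K s ≤ (vectorSpan K s).comap proj :=
        Submodule.span_le.2 fun y hy => by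
          simpa [proj, hconst y hy p hp, hne p hp] using vsub_mem_vectorSpan K hy hp
      simpa [proj, LinearMap.mem_ker.1 hφx] using hproj hx

section PolynomialFunction

/-- The affine functions on `P`, as a subspace of all functions. Its `k`-th power in the algebra
`P → K` is the space of polynomial functions of total degree at most `k`. -/
def affineFunctions (K : Type*) {V : Type*} (P : Type*) [CommRing K] [AddCommGroup V] [Module K V]
    [AddTorsor V P] : Submodule K (P → K) :=
  Submodule.span K (Set.range (DFunLike.coe : (P →ᵃ[K] K) → P → K))

theorem affineFunctions_eq_span_range_coord {K V P ι : Type*} [CommRing K] [AddCommGroup V]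
    [Module K V] [AddTorsor V P] [Finite ι] (b : AffineBasis ι K P) :
    affineFunctions K P = Submodule.span K (Set.range fun i => ⇑(b.coord i)) := by
  cases nonempty_fintype ι
  apply le_antisymm <;> refine Submodule.span_le.2 ?_
  · rintro _ ⟨f, rfl⟩
    have hf : ⇑f = ∑ i, f (b i) • ⇑(b.coord i) := by
      funext x
      have hx := congrArg f (b.affineCombination_coord_eq_self x)
      rw [Finset.map_affineCombination _ _ _ (b.sum_coord_apply_eq_one x),
        Finset.univ.affineCombination_eq_linear_combination _ _ (b.sum_coord_apply_eq_one x)] at hx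
      simpa [mul_comm] using hx.symm
    rw [SetLike.mem_coe, hf]
    exact Submodule.sum_mem _ fun i _ =>
      Submodule.smul_mem _ _ (Submodule.subset_span (Set.mem_range_self i))
  · rintro _ ⟨i, rfl⟩
    exact Submodule.subset_span (Set.mem_range_self (b.coord i))

theorem range_pow_eq_image_simplicialLattice {M ι : Type*} [CommMonoid M] [Fintype ι]
    (x : ι → M) (k : ℕ) :
    Set.range x ^ k = (fun α => ∏ l, x l ^ α l) '' simplicialLattice ι k := by
  rw [← Set.image_univ, Finsupp.image_pow_eq_finsuppProd_image]
  ext y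
  simp [Finsupp.equivFunOnFinite.symm.exists_congr_left, simplicialLattice,
    Finsupp.degree_eq_sum, Finsupp.prod_fintype]

/-- The scaled barycentric monomial `λ^α / α!` of the simplex with vertices `b`. -/
noncomputable def scaledMonomial {K V P ι : Type*} [Field K] [AddCommGroup V] [Module K V]
    [AddTorsor V P] [Fintype ι] (b : AffineBasis ι K P) (α : ι → ℕ) (x : P) : K :=
  (∏ l, b.coord l x ^ α l) / ∏ l, ((α l).factorial : K)

theorem affineFunctions_pow_eq_span_scaledMonomial {K V P ι : Type*} [Field K] [CharZero K]
    [AddCommGroup V] [Module K V] [AddTorsor V P] [Fintype ι] (b : AffineBasis ι K P) (k : ℕ) :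
    affineFunctions K P ^ k =
      Submodule.span K (scaledMonomial b '' simplicialLattice ι k) := by
  have hfac (α : ι → ℕ) : ∏ l, ((α l).factorial : K) ≠ 0 :=
    Finset.prod_ne_zero_iff.2 fun l _ => Nat.cast_ne_zero.2 (α l).factorial_ne_zero
  have hscale (α : ι → ℕ) : scaledMonomial b α =
      (∏ l, ((α l).factorial : K))⁻¹ • ∏ l, (⇑(b.coord l) : P → K) ^ α l := by
    ext x
    simp [scaledMonomial, div_eq_inv_mul]
  rw [affineFunctions_eq_span_range_coord b, Submodule.span_pow,
    range_pow_eq_image_simplicialLattice]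
  apply le_antisymm <;> refine Submodule.span_le.2 ?_
  · rintro _ ⟨α, hα, rfl⟩
    refine (Submodule.smul_mem_iff _ (inv_ne_zero (hfac α))).1 ?_
    rw [← hscale]
    exact Submodule.subset_span (Set.mem_image_of_mem _ hα)
  · rintro _ ⟨α, hα, rfl⟩
    rw [hscale]
    exact Submodule.smul_mem _ _ (Submodule.subset_span (Set.mem_image_of_mem _ hα))

theorem restrictTotalDegree_zero (σ R : Type*) [CommSemiring R] :
    MvPolynomial.restrictTotalDegree σ R 0 = 1 := by
  rw [← MvPolynomial.restrictSupport_zero]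
  exact congrArg (MvPolynomial.restrictSupport R)
    (Set.ext fun d => Nat.le_zero.trans (Finsupp.degree_eq_zero_iff d))

theorem restrictTotalDegree_add (σ R : Type*) [CommSemiring R] (k l : ℕ) :
    MvPolynomial.restrictTotalDegree σ R (k + l) =
      MvPolynomial.restrictTotalDegree σ R k * MvPolynomial.restrictTotalDegree σ R l := by
  have hIic : Set.Iic (k + l) = Set.Iic k + Set.Iic l := by
    ext n
    simp only [Set.mem_Iic, Set.mem_add]
    exact ⟨fun h => ⟨min n k, by lia, n - k, by lia, by lia⟩, by lia⟩
  have hdegree (m : ℕ) : MvPolynomial.restrictTotalDegree σ R m =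
      MvPolynomial.restrictSupport R (Finsupp.degree ⁻¹' Set.Iic m) := rfl
  rw [hdegree, hdegree, hdegree, hIic, Finsupp.degree_preimage_add,
    MvPolynomial.restrictSupport_add]

theorem restrictTotalDegree_one_pow (σ R : Type*) [CommSemiring R] (k : ℕ) :
    MvPolynomial.restrictTotalDegree σ R 1 ^ k = MvPolynomial.restrictTotalDegree σ R k := by
  induction k with
  | zero => rw [pow_zero, restrictTotalDegree_zero]
  | succ k ih => rw [pow_succ, ih, restrictTotalDegree_add]

theorem map_aeval_restrictTotalDegree_one (σ K : Type*) [Finite σ] [CommRing K] :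
    (MvPolynomial.restrictTotalDegree σ K 1).map
      (MvPolynomial.aeval fun (s : σ) (x : σ → K) => x s).toLinearMap =
        affineFunctions K (σ → K) := by
  classical
  cases nonempty_fintype σ
  apply le_antisymm
  · rw [MvPolynomial.restrictTotalDegree, MvPolynomial.restrictSupport_eq_span,
      Submodule.map_span, Submodule.span_le]
    rintro _ ⟨_, ⟨d, hd, rfl⟩, rfl⟩
    obtain hd | hd := Nat.le_one_iff_eq_zero_or_eq_one.1 hd
    · obtain rfl := (Finsupp.degree_eq_zero_iff d).1 hd
      exact Submodule.subset_span ⟨AffineMap.const K (σ → K) 1, by ext; simp⟩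
    · obtain ⟨s, -, rfl⟩ : d ∈ (Finsupp.single · 1) '' (Set.univ : Set σ) := by
        rw [← one_nsmul (_ '' _), Finsupp.nsmul_single_one_image]
        exact ⟨hd, Set.subset_univ _⟩
      exact Submodule.subset_span
        ⟨(LinearMap.proj s : (σ → K) →ₗ[K] K).toAffineMap,
          by ext; simp [MvPolynomial.aeval_monomial]⟩
  · rw [affineFunctions, Submodule.span_le]
    rintro _ ⟨f, rfl⟩
    refine ⟨MvPolynomial.C (f 0) + ∑ s, MvPolynomial.C (f.linear fun t => if s = t then 1 else 0) *
      MvPolynomial.X s, ?_, ?_⟩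
    · refine (MvPolynomial.mem_restrictTotalDegree ..).2 ((MvPolynomial.totalDegree_add _ _).trans
        (max_le (by simp) (MvPolynomial.totalDegree_finsetSum_le fun s _ => ?_)))
      rw [← pow_one (MvPolynomial.X s), MvPolynomial.C_mul_X_pow_eq_monomial]
      exact (MvPolynomial.totalDegree_monomial_le _ _).trans (by simp)
    · ext x
      rw [AffineMap.decomp f]
      simp [LinearMap.pi_apply_eq_sum_univ f.linear x, mul_comm, add_comm]

theorem mem_affineFunctions_pow_iff {σ K : Type*} [Finite σ] [CommRing K] {k : ℕ}
    {p : (σ → K) → K} :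
    p ∈ affineFunctions K (σ → K) ^ k ↔
      ∃ q : MvPolynomial σ K, q.totalDegree ≤ k ∧ p = fun x => MvPolynomial.eval x q := by
  have haeval (q : MvPolynomial σ K) :
      MvPolynomial.aeval (fun (s : σ) (x : σ → K) => x s) q = fun x => MvPolynomial.eval x q := by
    ext x
    simp [MvPolynomial.aeval_def, MvPolynomial.eval₂_eq, MvPolynomial.eval_eq]
  rw [← map_aeval_restrictTotalDegree_one, ← Submodule.map_pow, restrictTotalDegree_one_pow]
  simp only [Submodule.mem_map, MvPolynomial.mem_restrictTotalDegree, AlgHom.toLinearMap_apply,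
    haeval, eq_comm]

end PolynomialFunction

-- On all functions the Bochner integral is not additive, being `0` on non-integrable ones.
theorem exists_linearMap_eq_integral {X : Type*} (F : Type*) [MeasurableSpace X]
    [NormedAddCommGroup F] [NormedSpace ℝ F] (μ : Measure X) :
    ∃ φ : (X → F) →ₗ[ℝ] F, ∀ f, Integrable f μ → φ f = ∫ x, f x ∂μ := by
  let integrableFunctions : Submodule ℝ (X → F) :=
    { carrier := {f | Integrable f μ}
      add_mem' := Integrable.add
      zero_mem' := integrable_zero _ _ _
      smul_mem' := fun c _ hf => hf.smul c }
  let integral : integrableFunctions →ₗ[ℝ] F :=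
    { toFun := fun f => ∫ x, f.1 x ∂μ
      map_add' := fun f g => integral_add f.2 g.2
      map_smul' := fun c f => integral_smul c f.1 }
  obtain ⟨φ, hφ⟩ := integral.exists_extend
  exact ⟨φ, fun f hf => LinearMap.congr_fun hφ ⟨f, hf⟩⟩

theorem coord_add_smul_sub {K V ι : Type*} [CommRing K] [AddCommGroup V] [Module K V]
    [DecidableEq ι] (b : AffineBasis ι K V) (i j l : ι) (x : V) (r : K) :
    b.coord l (x + r • (b i - b j)) =
      b.coord l x + r * ((if l = i then 1 else 0) - (if l = j then 1 else 0)) := by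
  have hline : b.coord l (r • (b i - b j) + x) =
      r * (b.coord l).linear (b i - b j) + b.coord l x := by
    simpa using (b.coord l).map_vadd x (r • (b i - b j))
  have hlinear : (b.coord l).linear (b i - b j) = b.coord l (b i) - b.coord l (b j) :=
    (b.coord l).linearMap_vsub (b i) (b j)
  rw [add_comm x, hline, hlinear, b.coord_apply, b.coord_apply, add_comm]

section Integral

theorem integral_eq_zero_of_hasDerivAt_add_smul {E F : Type*} [AddCommGroup E] [Module ℝ E]
    [MeasurableSpace E] [MeasurableAdd₂ E] [MeasurableSMul₂ ℝ E] [NormedAddCommGroup F]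
    [NormedSpace ℝ F] [CompleteSpace F] {μ : Measure E} [SFinite μ] [μ.IsAddRightInvariant]
    {f f' : E → F} {t : E} (hf : Integrable f μ) (hf' : Integrable f' μ)
    (hcont : ∀ x, Continuous fun r : ℝ => f (x + r • t))
    (hderiv : ∀ x, ∃ s : Set ℝ, s.Countable ∧
      ∀ r ∉ s, HasDerivAt (fun r : ℝ => f (x + r • t)) (f' (x + r • t)) r) :
    ∫ x, f' x ∂μ = 0 := by
  let ν : Measure ℝ := volume.restrict (Set.Ioc 0 1)
  have hshear : MeasurePreserving (fun p : ℝ × E => (p.1, p.2 + p.1 • t))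
      (ν.prod μ) (ν.prod μ) :=
    (MeasurePreserving.id ν).skew_product (by fun_prop)
      (ae_of_all _ fun r => (measurePreserving_add_right μ (r • t)).map_eq)
  have hint : Integrable (fun p : ℝ × E => f' (p.2 + p.1 • t)) (ν.prod μ) :=
    hshear.integrable_comp_of_integrable (hf'.comp_snd ν)
  have hFTC : ∀ᵐ x ∂μ, ∫ r, f' (x + r • t) ∂ν = f (x + t) - f x := by
    filter_upwards [hint.prod_left_ae] with x hx
    obtain ⟨s, hs, hderiv⟩ := hderiv x
    have := integral_eq_of_hasDerivAt_off_countable_of_le _ _ zero_le_one hs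
      (hcont x).continuousOn (fun r hr => hderiv r hr.2)
      ((intervalIntegrable_iff_integrableOn_Ioc_of_le zero_le_one).2 hx)
    simpa [intervalIntegral.integral_of_le zero_le_one] using this
  calc ∫ x, f' x ∂μ = ∫ r, ∫ x, f' (x + r • t) ∂μ ∂ν := by
        simp [ν, integral_add_right_eq_self]
    _ = ∫ x, ∫ r, f' (x + r • t) ∂ν ∂μ := integral_integral_swap hint
    _ = ∫ x, (f (x + t) - f x) ∂μ := integral_congr_ae hFTC
    _ = 0 := by
        rw [integral_sub (hf.comp_add_right t) hf, integral_add_right_eq_self, sub_self]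

/-- The normalized truncated power `s₊ ^ m / m!`, where `s₊ ^ 0` is the indicator function of
`[0, ∞)`. -/
noncomputable def truncatedPow (m : ℕ) (s : ℝ) : ℝ :=
  if 0 ≤ s then s ^ m / m.factorial else 0

theorem continuous_truncatedPow_succ (m : ℕ) : Continuous (truncatedPow (m + 1)) := by
  have h : truncatedPow (m + 1) = fun s : ℝ => max s 0 ^ (m + 1) / (m + 1).factorial := by
    ext s
    obtain hs | hs := le_or_gt 0 s
    · simp [truncatedPow, hs]
    · simp [truncatedPow, hs.not_ge, hs.le]
  rw [h]
  fun_prop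

theorem hasDerivAt_truncatedPow_succ (m : ℕ) {s : ℝ} (hs : s ≠ 0) :
    HasDerivAt (truncatedPow (m + 1)) (truncatedPow m s) s := by
  obtain hs | hs := hs.lt_or_gt
  · rw [truncatedPow, if_neg hs.not_ge]
    refine (hasDerivAt_const s 0).congr_of_eventuallyEq ?_
    filter_upwards [Iio_mem_nhds hs] with r hr
    exact if_neg (not_le.2 hr)
  · rw [truncatedPow, if_pos hs.le]
    have hpow : HasDerivAt (fun r : ℝ => r ^ (m + 1) / (m + 1).factorial)
        (s ^ m / m.factorial) s := by
      refine ((hasDerivAt_pow (m + 1) s).div_const _).congr_deriv ?_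
      have := m.factorial_ne_zero
      rw [Nat.factorial_succ]
      push_cast
      field_simp
    refine hpow.congr_of_eventuallyEq ?_
    filter_upwards [Ioi_mem_nhds hs] with r hr
    exact if_pos (Set.mem_Ioi.1 hr).le

variable {E ι : Type*} [NormedAddCommGroup E] [NormedSpace ℝ E] [Fintype ι]
  (b : AffineBasis ι ℝ E)

/-- The zero extension of the scaled monomial `λ^α / α!` from the simplex to the whole space, as a
product of truncated powers of the barycentric coordinates. -/
noncomputable def truncatedMonomial (α : ι → ℕ) (x : E) : ℝ :=
  ∏ l, truncatedPow (α l) (b.coord l x)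

theorem indicator_convexHull_scaledMonomial (α : ι → ℕ) :
    (convexHull ℝ (Set.range b)).indicator (scaledMonomial b α) = truncatedMonomial b α := by
  ext x
  rw [b.convexHull_eq_nonneg_coord, Set.indicator_apply, truncatedMonomial]
  split_ifs with hx
  · rw [scaledMonomial, ← Finset.prod_div_distrib]
    exact Finset.prod_congr rfl fun l _ => (if_pos (hx l)).symm
  · obtain ⟨l, hl⟩ := not_forall.1 hx
    exact (Finset.prod_eq_zero (Finset.mem_univ l) (if_neg hl)).symm

section DecidableEq

variable [DecidableEq ι] (γ : ι → ℕ) {i j : ι}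

theorem truncatedMonomial_add_smul_sub (hij : i ≠ j) (m n : ℕ) (x : E) (r : ℝ) :
    truncatedMonomial b (γ + Pi.single i m + Pi.single j n) (x + r • (b i - b j)) =
      truncatedPow (γ i + m) (b.coord i x + r) * truncatedPow (γ j + n) (b.coord j x - r) *
        ∏ l ∈ {i, j}ᶜ, truncatedPow (γ l) (b.coord l x) := by
  rw [truncatedMonomial, ← Finset.prod_mul_prod_compl {i, j}, Finset.prod_pair hij]
  congr 1
  · rw [coord_add_smul_sub, coord_add_smul_sub]
    simp [hij, hij.symm, sub_eq_add_neg]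
  · refine Finset.prod_congr rfl fun l hl => ?_
    obtain ⟨hli, hlj⟩ : l ≠ i ∧ l ≠ j := by simpa [not_or] using hl
    simp [coord_add_smul_sub, hli, hlj]

theorem continuous_truncatedMonomial_add_smul_sub (hij : i ≠ j) (x : E) :
    Continuous fun r : ℝ =>
      truncatedMonomial b (γ + Pi.single i 1 + Pi.single j 1) (x + r • (b i - b j)) := by
  have hi := continuous_truncatedPow_succ (γ i)
  have hj := continuous_truncatedPow_succ (γ j)
  simp only [truncatedMonomial_add_smul_sub b γ hij]
  fun_prop

theorem hasDerivAt_truncatedMonomial_add_smul_sub (hij : i ≠ j) {x : E} {r : ℝ}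
    (hi : b.coord i x + r ≠ 0) (hj : b.coord j x - r ≠ 0) :
    HasDerivAt
      (fun r : ℝ =>
        truncatedMonomial b (γ + Pi.single i 1 + Pi.single j 1) (x + r • (b i - b j)))
      (truncatedMonomial b (γ + Pi.single j 1) (x + r • (b i - b j)) -
        truncatedMonomial b (γ + Pi.single i 1) (x + r • (b i - b j))) r := by
  have hline := truncatedMonomial_add_smul_sub b γ hij (x := x)
  have hline_j := hline 0 1 r
  have hline_i := hline 1 0 r
  rw [Pi.single_zero, add_zero, add_zero] at hline_i hline_j
  simp only [hline, hline_i, hline_j]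
  have hdi := (hasDerivAt_truncatedPow_succ (γ i) hi).comp_const_add (b.coord i x) r
  have hdj := (hasDerivAt_truncatedPow_succ (γ j) hj).comp_const_sub (b.coord j x) r
  refine ((hdi.mul hdj).mul_const _).congr_deriv ?_
  ring

end DecidableEq

theorem continuous_scaledMonomial (α : ι → ℕ) : Continuous (scaledMonomial b α) := by
  have := b.finiteDimensional
  exact (continuous_finsetProd _ fun l _ =>
    (b.coord l).continuous_of_finiteDimensional.pow _).div_const _

variable [MeasurableSpace E] [BorelSpace E] (μ : Measure E)

theorem measurableSet_convexHull_range {κ : Type*} [Finite κ] (v : κ → E) :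
    MeasurableSet (convexHull ℝ (Set.range v)) :=
  ((Set.finite_range v).isCompact_convexHull ℝ).measurableSet

theorem integrableOn_scaledMonomial [IsFiniteMeasureOnCompacts μ] (α : ι → ℕ) :
    IntegrableOn (scaledMonomial b α) (convexHull ℝ (Set.range b)) μ :=
  (continuous_scaledMonomial b α).continuousOn.integrableOn_compact
    ((Set.finite_range b).isCompact_convexHull ℝ)

theorem integrableOn_of_mem_affineFunctions_pow [IsFiniteMeasureOnCompacts μ] {κ : Type*}
    [Finite κ] (b : AffineBasis κ ℝ E) {k : ℕ} {p : E → ℝ} (hp : p ∈ affineFunctions ℝ E ^ k) :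
    IntegrableOn p (convexHull ℝ (Set.range b)) μ := by
  cases nonempty_fintype κ
  rw [affineFunctions_pow_eq_span_scaledMonomial b] at hp
  induction hp using Submodule.span_induction with
  | mem _ h =>
    obtain ⟨α, -, rfl⟩ := h
    exact integrableOn_scaledMonomial b μ α
  | zero => exact integrableOn_zero
  | add _ _ _ _ hf hg => exact hf.add hg
  | smul c _ _ hf => exact hf.smul c

theorem integrable_truncatedMonomial [IsFiniteMeasureOnCompacts μ] (α : ι → ℕ) :
    Integrable (truncatedMonomial b α) μ := by
  rw [← indicator_convexHull_scaledMonomial]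
  exact (integrableOn_scaledMonomial b μ α).integrable_indicator
    (measurableSet_convexHull_range b)

theorem integral_truncatedMonomial (α : ι → ℕ) :
    ∫ x, truncatedMonomial b α x ∂μ =
      ∫ x in convexHull ℝ (Set.range b), scaledMonomial b α x ∂μ := by
  rw [← indicator_convexHull_scaledMonomial, integral_indicator (measurableSet_convexHull_range b)]

theorem setIntegral_scaledMonomial_pos [μ.IsOpenPosMeasure] [IsFiniteMeasureOnCompacts μ]
    (α : ι → ℕ) : 0 < ∫ x in convexHull ℝ (Set.range b), scaledMonomial b α x ∂μ := by
  have hfac : 0 < ∏ l, ((α l).factorial : ℝ) :=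
    Finset.prod_pos fun l _ => Nat.cast_pos.2 (α l).factorial_pos
  have hnonneg : ∀ x ∈ convexHull ℝ (Set.range b), 0 ≤ scaledMonomial b α x := fun x hx => by
    rw [b.convexHull_eq_nonneg_coord] at hx
    exact div_nonneg (Finset.prod_nonneg fun l _ => pow_nonneg (hx l) _) hfac.le
  have hpos : ∀ x ∈ interior (convexHull ℝ (Set.range b)), 0 < scaledMonomial b α x :=
    fun x hx => by
      rw [b.interior_convexHull] at hx
      exact div_pos (Finset.prod_pos fun l _ => pow_pos (hx l) _) hfac
  have := b.finiteDimensional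
  refine (setIntegral_pos_iff_support_of_nonneg_ae
    (ae_restrict_of_forall_mem (measurableSet_convexHull_range b) hnonneg)
    (integrableOn_scaledMonomial b μ α)).2
    ((isOpen_interior.measure_pos μ
      ⟨_, b.centroid_mem_interior_convexHull⟩).trans_le ?_)
  exact measure_mono fun x hx => ⟨(hpos x hx).ne', interior_subset hx⟩

variable [μ.IsAddHaarMeasure]

theorem setIntegral_scaledMonomial_add_single [DecidableEq ι] (γ : ι → ℕ) (i j : ι) :
    ∫ x in convexHull ℝ (Set.range b), scaledMonomial b (γ + Pi.single i 1) x ∂μ =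
      ∫ x in convexHull ℝ (Set.range b), scaledMonomial b (γ + Pi.single j 1) x ∂μ := by
  obtain rfl | hij := eq_or_ne i j
  · rfl
  have := b.finiteDimensional
  have hint := integrable_truncatedMonomial b μ
  rw [← integral_truncatedMonomial, ← integral_truncatedMonomial, eq_comm, ← sub_eq_zero,
    ← integral_sub (hint _) (hint _)]
  refine integral_eq_zero_of_hasDerivAt_add_smul (hint (γ + Pi.single i 1 + Pi.single j 1))
    ((hint _).sub (hint _)) (continuous_truncatedMonomial_add_smul_sub b γ hij) fun x =>
    ⟨{-b.coord i x, b.coord j x}, Set.to_countable _, fun r hr => ?_⟩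
  obtain ⟨hi, hj⟩ : r ≠ -b.coord i x ∧ r ≠ b.coord j x := by simpa [not_or] using hr
  exact hasDerivAt_truncatedMonomial_add_smul_sub b γ hij
    (fun h => hi (eq_neg_of_add_eq_zero_right h)) (sub_ne_zero.2 hj.symm)

theorem setIntegral_scaledMonomial_eq {k : ℕ} {α β : ι → ℕ} (hα : α ∈ simplicialLattice ι k)
    (hβ : β ∈ simplicialLattice ι k) :
    ∫ x in convexHull ℝ (Set.range b), scaledMonomial b α x ∂μ =
      ∫ x in convexHull ℝ (Set.range b), scaledMonomial b β x ∂μ := by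
  classical
  exact eq_of_forall_add_single_eq
    (g := fun α => ∫ x in convexHull ℝ (Set.range b), scaledMonomial b α x ∂μ)
    (fun γ i j _ => setIntegral_scaledMonomial_add_single b μ γ i j) hα hβ

end Integral

theorem exists_affineBasis_coord_eq {K V P ι : Type*} [Field K] [AddCommGroup V] [Module K V]
    [AddTorsor V P] [DecidableEq ι] {v : ι → P} (hv : AffineIndependent K v)
    (htop : affineSpan K (Set.range v) = ⊤) {lam : ι → P →ᵃ[K] K}
    (hlam : ∀ i j, lam i (v j) = if i = j then 1 else 0) :
    ∃ b : AffineBasis ι K P, ⇑b = v ∧ b.coord = lam := by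
  let b : AffineBasis ι K P := ⟨v, hv, htop⟩
  refine ⟨b, rfl, funext fun i => AffineMap.ext_on htop ?_⟩
  rintro _ ⟨j, rfl⟩
  rw [hlam i j]
  exact b.coord_apply i j

theorem polynomial_meanzero_eq_span_differences_general {ι E : Type*} [Fintype ι]
    [NormedAddCommGroup E] [NormedSpace ℝ E] [MeasurableSpace E] [BorelSpace E] (μ : Measure E)
    [μ.IsAddHaarMeasure] (b : AffineBasis ι ℝ E) (k : ℕ) :
    {p : E → ℝ | p ∈ affineFunctions ℝ E ^ k ∧ ∫ x in convexHull ℝ (Set.range b), p x ∂μ = 0} =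
      ↑(Submodule.span ℝ {g : E → ℝ | ∃ α β : ι → ℕ,
        α ∈ simplicialLattice ι k ∧ β ∈ simplicialLattice ι k ∧
          ∑ i, ((α i : ℤ) - (β i : ℤ)).natAbs = 2 ∧
          g = scaledMonomial b α - scaledMonomial b β}) := by
  classical
  obtain ⟨φ, hφ⟩ := exists_linearMap_eq_integral ℝ (μ.restrict (convexHull ℝ (Set.range b)))
  have hφ_monomial (α : ι → ℕ) := hφ _ (integrableOn_scaledMonomial b μ α)
  have hφ_ne : ∀ f ∈ scaledMonomial b '' simplicialLattice ι k, φ f ≠ 0 := by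
    rintro _ ⟨α, -, rfl⟩
    rw [hφ_monomial]
    exact (setIntegral_scaledMonomial_pos b μ α).ne'
  have hφ_const : ∀ f ∈ scaledMonomial b '' simplicialLattice ι k,
      ∀ g ∈ scaledMonomial b '' simplicialLattice ι k, φ f = φ g := by
    rintro _ ⟨α, hα, rfl⟩ _ ⟨β, hβ, rfl⟩
    rw [hφ_monomial, hφ_monomial, setIntegral_scaledMonomial_eq b μ hα hβ]
  rw [← vectorSpan_image_simplicialLattice, vectorSpan_eq_span_inf_ker hφ_ne hφ_const,
    ← affineFunctions_pow_eq_span_scaledMonomial]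
  ext p
  refine and_congr_right fun hp => ?_
  rw [← hφ p (integrableOn_of_mem_affineFunctions_pow μ b hp)]
  exact LinearMap.mem_ker.symm

/-- the space of polynomial functions of total degree at most `k` on `ℝⁿ`
with vanishing Lebesgue integral over the simplex `T = conv{v₀,…,v_n}` equals the span of
the differences `λ^α/α! − λ^β/β!` over pairs of lattice nodes `α, β ∈ 𝕋ⁿ_k` at
distance one. -/
theorem polynomial_meanzero_eq_span_differences
    (n k : ℕ) (hn : 1 ≤ n)
    (v : Fin (n + 1) → (Fin n → ℝ)) (hv : AffineIndependent ℝ v)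
    (lam : Fin (n + 1) → ((Fin n → ℝ) →ᵃ[ℝ] ℝ))
    (hlam : ∀ i j, lam i (v j) = if i = j then 1 else 0)
    (hsum : ∀ x : Fin n → ℝ, ∑ i, lam i x = 1) :
    {p : (Fin n → ℝ) → ℝ |
        (∃ q : MvPolynomial (Fin n) ℝ, q.totalDegree ≤ k ∧
          p = fun x => MvPolynomial.eval x q) ∧
        (∫ x in convexHull ℝ (Set.range v), p x) = 0}
      = ↑(Submodule.span ℝ
          {g : (Fin n → ℝ) → ℝ | ∃ α β : Fin (n + 1) → ℕ,
            (∑ i, α i = k) ∧ (∑ i, β i = k) ∧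
            (∑ i, ((α i : ℤ) - (β i : ℤ)).natAbs = 2) ∧
            g = fun x => (∏ ℓ, (lam ℓ x) ^ (α ℓ)) / (∏ ℓ, (Nat.factorial (α ℓ) : ℝ))
                  - (∏ ℓ, (lam ℓ x) ^ (β ℓ)) / (∏ ℓ, (Nat.factorial (β ℓ) : ℝ))}) := by
  have htop : affineSpan ℝ (Set.range v) = ⊤ :=
    hv.affineSpan_eq_top_iff_card_eq_finrank_add_one.2 (by simp)
  obtain ⟨b, rfl, rfl⟩ := exists_affineBasis_coord_eq hv htop hlam
  simp_rw [← mem_affineFunctions_pow_iff]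
  exact polynomial_meanzero_eq_span_differences_general volume b k
end

section
/- Let n ≥ 1, let v₀,…,v_n be affinely independent points of ℝⁿ with barycentric coordinates λ₀,…,λ_n, let α ∈ 𝕋ⁿ_k, and let 0 ≤ i ≠ j ≤ n with α_j ≥ 1; set β = α + ε_i − ε_j ∈ 𝕋ⁿ_k. Then the divergence of the polynomial vector field x ↦ λ^{α+ε_i}(x)·(v_i − v_j) satisfies (1/(β!·α_j))·div(λ^{α+ε_i} t_{j,i}) = λ^α/α! − λ^β/β!, where t_{j,i} = v_i − v_j. -/
open scoped BigOperators

/-!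
Write `λ^[γ] = λ^γ / γ!` for the divided monomials and put `γ = α + ε_i = β + ε_j`, so that
`γ! = β! α_j`. Along `v_i - v_j` the derivative of `λ` is `ε_i - ε_j`, and `∂_i` lowers the `i`-th
exponent of a divided monomial by one with no coefficient. Hence the derivative of `λ^[γ]` along
`v_i - v_j` is `λ^[γ - ε_i] - λ^[γ - ε_j] = λ^[α] - λ^[β]`.
-/

section MultiIndex

variable {ι : Type*} [DecidableEq ι]

theorem add_single_eq_add_single_of_eq_sub {α β : ι → ℕ} {i j : ι} (hαj : 1 ≤ α j)
    (hβ : β = fun ℓ => (α ℓ + if ℓ = i then 1 else 0) - if ℓ = j then 1 else 0) :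
    α + Pi.single i 1 = β + Pi.single j 1 := by
  funext ℓ
  rcases eq_or_ne ℓ j with rfl | hℓ
  · simp only [hβ, Pi.add_apply, Pi.single_apply, if_true]
    omega
  · simp [hβ, hℓ, Pi.single_apply]

variable [Fintype ι]

theorem prod_add_single_one {M : Type*} [CommMonoid M] (g : ι → ℕ → M) (α : ι → ℕ) (i : ι) :
    ∏ ℓ, g ℓ ((α + Pi.single i 1 : ι → ℕ) ℓ) =
      g i (α i + 1) * ∏ ℓ ∈ Finset.univ.erase i, g ℓ (α ℓ) := by
  rw [← Finset.mul_prod_erase _ _ (Finset.mem_univ i), Pi.add_apply, Pi.single_eq_same]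
  congr 1
  exact Finset.prod_congr rfl fun ℓ hℓ => by simp [Finset.ne_of_mem_erase hℓ]

theorem prod_factorial_add_single_one (α : ι → ℕ) (i : ι) :
    ∏ ℓ, ((α + Pi.single i 1 : ι → ℕ) ℓ).factorial = (α i + 1) * ∏ ℓ, (α ℓ).factorial := by
  rw [prod_add_single_one fun _ => Nat.factorial, Nat.factorial_succ, mul_assoc,
    Finset.mul_prod_erase _ (fun ℓ => (α ℓ).factorial) (Finset.mem_univ i)]

theorem prod_factorial_mul_eq_of_add_single {α β : ι → ℕ} {i j : ι} (hij : i ≠ j)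
    (hαβ : α + Pi.single i 1 = β + Pi.single j 1) :
    (∏ ℓ, (β ℓ).factorial) * α j = ∏ ℓ, ((α + Pi.single i 1 : ι → ℕ) ℓ).factorial := by
  have hαj : α j = β j + 1 := by simpa [hij.symm] using congrFun hαβ j
  rw [hαβ, prod_factorial_add_single_one, hαj, mul_comm]

end MultiIndex

section DividedMonomial

variable {ι 𝕜 : Type*} [Fintype ι]

/-- The divided monomial `z^[α] = ∏ ℓ, z_ℓ ^ α_ℓ / α_ℓ!`, that is, `z^α / α!` in multi-index
notation. It is the normalization of monomials for which partial differentiation shifts the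
exponent without producing a coefficient. -/
noncomputable def dividedMonomial [Field 𝕜] (α : ι → ℕ) (z : ι → 𝕜) : 𝕜 :=
  ∏ ℓ, z ℓ ^ α ℓ / (α ℓ).factorial

theorem dividedMonomial_eq_div [Field 𝕜] (α : ι → ℕ) (z : ι → 𝕜) :
    dividedMonomial α z = (∏ ℓ, z ℓ ^ α ℓ) / ∏ ℓ, ((α ℓ).factorial : 𝕜) :=
  Finset.prod_div_distrib ..

theorem dividedMonomial_add_single_one_update [DecidableEq ι] [Field 𝕜] (α : ι → ℕ) (i : ι)
    (z : ι → 𝕜) (t : 𝕜) :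
    dividedMonomial (α + Pi.single i 1) (Function.update z i t) =
      t ^ (α i + 1) / (α i + 1).factorial *
        ∏ ℓ ∈ Finset.univ.erase i, z ℓ ^ α ℓ / (α ℓ).factorial := by
  rw [dividedMonomial,
    prod_add_single_one fun ℓ a => Function.update z i t ℓ ^ a / (a.factorial : 𝕜),
    Function.update_self]
  congr 1
  exact Finset.prod_congr rfl fun ℓ hℓ => by rw [Function.update_of_ne (Finset.ne_of_mem_erase hℓ)]

variable [NontriviallyNormedField 𝕜]

theorem differentiable_dividedMonomial (α : ι → ℕ) :
    Differentiable 𝕜 (dividedMonomial α : (ι → 𝕜) → 𝕜) := by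
  unfold dividedMonomial
  fun_prop

variable [CharZero 𝕜]

theorem hasDerivAt_pow_succ_div_factorial (m : ℕ) (t : 𝕜) :
    HasDerivAt (fun s : 𝕜 => s ^ (m + 1) / (m + 1).factorial) (t ^ m / m.factorial) t := by
  refine ((hasDerivAt_pow (m + 1) t).div_const ((m + 1).factorial : 𝕜)).congr_deriv ?_
  rw [Nat.factorial_succ, Nat.cast_mul, Nat.add_sub_cancel,
    mul_div_mul_left _ _ (Nat.cast_ne_zero.mpr m.succ_ne_zero)]

variable [DecidableEq ι]

theorem fderiv_dividedMonomial_add_single_one (α : ι → ℕ) (i : ι) (z : ι → 𝕜) :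
    fderiv 𝕜 (dividedMonomial (α + Pi.single i 1)) z (Pi.single i 1) = dividedMonomial α z := by
  have hchain : HasDerivAt (dividedMonomial (α + Pi.single i 1) ∘ Function.update z i)
      (fderiv 𝕜 (dividedMonomial (α + Pi.single i 1)) z (Pi.single i 1)) (z i) := by
    refine HasFDerivAt.comp_hasDerivAt _ ?_ (hasDerivAt_update z i (z i))
    rw [Function.update_eq_self]
    exact (differentiable_dividedMonomial _ z).hasFDerivAt
  have hline : HasDerivAt (dividedMonomial (α + Pi.single i 1) ∘ Function.update z i)
      (dividedMonomial α z) (z i) := by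
    rw [dividedMonomial, ← Finset.mul_prod_erase _ _ (Finset.mem_univ i)]
    simp only [Function.comp_def, dividedMonomial_add_single_one_update]
    exact (hasDerivAt_pow_succ_div_factorial (α i) (z i)).mul_const _
  exact hchain.unique hline

theorem fderiv_dividedMonomial_comp {E : Type*} [NormedAddCommGroup E] [NormedSpace 𝕜 E]
    {f : E → ι → 𝕜} {f' : E →L[𝕜] ι → 𝕜} {x d : E} {α β : ι → ℕ} {i j : ι}
    (hf : HasFDerivAt f f' x) (hd : f' d = Pi.single i 1 - Pi.single j 1)
    (hαβ : α + Pi.single i 1 = β + Pi.single j 1) :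
    fderiv 𝕜 (fun y => dividedMonomial (α + Pi.single i 1) (f y)) x d =
      dividedMonomial α (f x) - dividedMonomial β (f x) := by
  have hcomp := (differentiable_dividedMonomial (α + Pi.single i 1) (f x)).hasFDerivAt.comp x hf
  calc fderiv 𝕜 (fun y => dividedMonomial (α + Pi.single i 1) (f y)) x d
      = fderiv 𝕜 (dividedMonomial (α + Pi.single i 1)) (f x) (f' d) :=
        congrArg (· d) hcomp.fderiv
    _ = dividedMonomial α (f x) - dividedMonomial β (f x) := by
        rw [hd, map_sub, fderiv_dividedMonomial_add_single_one, hαβ,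
          fderiv_dividedMonomial_add_single_one]

end DividedMonomial

section Divergence

variable {𝕜 κ : Type*} [NontriviallyNormedField 𝕜]

theorem hasFDerivAt_affineMap_pi [Finite κ] {F : Type*} [NormedAddCommGroup F] [NormedSpace 𝕜 F]
    (f : (κ → 𝕜) →ᵃ[𝕜] F) (x : κ → 𝕜) :
    HasFDerivAt f (⟨f.linear, f.linear.continuous_on_pi⟩ : (κ → 𝕜) →L[𝕜] F) x := by
  cases nonempty_fintype κ
  rw [f.decomp]
  exact ContinuousLinearMap.hasFDerivAt (⟨f.linear, f.linear.continuous_on_pi⟩ : (κ → 𝕜) →L[𝕜] F)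
    |>.add_const (f 0)

variable [Fintype κ] [DecidableEq κ]

theorem sum_fderiv_mul_const_single {p : (κ → 𝕜) → 𝕜} {x : κ → 𝕜}
    (hp : DifferentiableAt 𝕜 p x) (c : κ → 𝕜) :
    ∑ m, fderiv 𝕜 (fun y => p y * c m) x (Pi.single m 1) = fderiv 𝕜 p x c := by
  conv_rhs => rw [pi_eq_sum_univ' c, map_sum]
  refine Finset.sum_congr rfl fun m _ => ?_
  rw [fderiv_mul_const hp, smul_apply, map_smul]

theorem div_bernstein_edge_field_general {ι : Type*} [Fintype ι] [DecidableEq ι] [CharZero 𝕜]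
    (v : ι → κ → 𝕜) (lam : ι → (κ → 𝕜) →ᵃ[𝕜] 𝕜)
    (hlam : ∀ i j, lam i (v j) = if i = j then 1 else 0)
    {α β : ι → ℕ} {i j : ι} (hij : i ≠ j) (hαβ : α + Pi.single i 1 = β + Pi.single j 1)
    (x : κ → 𝕜) :
    (1 / ((∏ ℓ, ((β ℓ).factorial : 𝕜)) * (α j : 𝕜))) *
      (∑ m, fderiv 𝕜
        (fun y => (∏ ℓ, lam ℓ y ^ (α + Pi.single i 1 : ι → ℕ) ℓ) * (v i - v j) m)
        x (Pi.single m 1)) =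
      (∏ ℓ, lam ℓ x ^ α ℓ) / (∏ ℓ, ((α ℓ).factorial : 𝕜)) -
        (∏ ℓ, lam ℓ x ^ β ℓ) / (∏ ℓ, ((β ℓ).factorial : 𝕜)) := by
  have hlam' := hasFDerivAt_affineMap_pi (AffineMap.pi lam) x
  have hedge : (AffineMap.pi lam).linear (v i - v j) = Pi.single i 1 - Pi.single j 1 := by
    rw [← vsub_eq_sub, AffineMap.linearMap_vsub]
    ext ℓ
    simp [hlam, Pi.single_apply]
  have hdiff : DifferentiableAt 𝕜 (fun y => ∏ ℓ, lam ℓ y ^ (α + Pi.single i 1 : ι → ℕ) ℓ) x := by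
    have (ℓ : ι) := (hasFDerivAt_affineMap_pi (lam ℓ) x).differentiableAt
    fun_prop
  have hfact : (∏ ℓ, ((β ℓ).factorial : 𝕜)) * α j =
      ∏ ℓ, (((α + Pi.single i 1 : ι → ℕ) ℓ).factorial : 𝕜) :=
    mod_cast prod_factorial_mul_eq_of_add_single hij hαβ
  rw [sum_fderiv_mul_const_single hdiff, hfact, one_div]
  calc (∏ ℓ, (((α + Pi.single i 1 : ι → ℕ) ℓ).factorial : 𝕜))⁻¹ *
        fderiv 𝕜 (fun y => ∏ ℓ, lam ℓ y ^ (α + Pi.single i 1 : ι → ℕ) ℓ) x (v i - v j)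
      = fderiv 𝕜 (fun y => dividedMonomial (α + Pi.single i 1) (AffineMap.pi lam y)) x
          (v i - v j) := by
        simp only [dividedMonomial_eq_div, AffineMap.pi_apply, div_eq_inv_mul]
        rw [fderiv_const_mul hdiff, smul_apply, smul_eq_mul]
    _ = dividedMonomial α (AffineMap.pi lam x) - dividedMonomial β (AffineMap.pi lam x) :=
        fderiv_dividedMonomial_comp hlam' hedge hαβ
    _ = _ := by simp only [dividedMonomial_eq_div, AffineMap.pi_apply]

end Divergence

/-- with `β = α + ε_i − ε_j` (requiring `α_j ≥ 1`),
`(1/(β!·α_j)) · div(λ^{α+ε_i} t_{j,i}) = λ^α/α! − λ^β/β!`, where `t_{j,i} = v_i − v_j`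
and the divergence of the vector field `x ↦ λ^{α+ε_i}(x) • t_{j,i}` is
`∑_m ∂_m (λ^{α+ε_i} (t_{j,i})_m)`. -/
theorem div_bernstein_edge_field
    (n k : ℕ) (hn : 1 ≤ n)
    (v : Fin (n + 1) → (Fin n → ℝ)) (hv : AffineIndependent ℝ v)
    (lam : Fin (n + 1) → ((Fin n → ℝ) →ᵃ[ℝ] ℝ))
    (hlam : ∀ i j, lam i (v j) = if i = j then 1 else 0)
    (hsum : ∀ x : Fin n → ℝ, ∑ i, lam i x = 1)
    (α : Fin (n + 1) → ℕ) (hαk : ∑ i, α i = k)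
    (i j : Fin (n + 1)) (hij : i ≠ j) (hαj : 1 ≤ α j)
    (β : Fin (n + 1) → ℕ)
    (hβ : β = fun ℓ => (α ℓ + if ℓ = i then 1 else 0) - if ℓ = j then 1 else 0)
    (x : Fin n → ℝ) :
    (1 / ((∏ ℓ, (Nat.factorial (β ℓ) : ℝ)) * (α j : ℝ))) *
      (∑ m : Fin n, fderiv ℝ
        (fun y => (∏ ℓ, (lam ℓ y) ^ (α ℓ + if ℓ = i then 1 else 0)) * (v i - v j) m)
        x (Pi.single m 1))
    = (∏ ℓ, (lam ℓ x) ^ (α ℓ)) / (∏ ℓ, (Nat.factorial (α ℓ) : ℝ))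
      - (∏ ℓ, (lam ℓ x) ^ (β ℓ)) / (∏ ℓ, (Nat.factorial (β ℓ) : ℝ)) := by
  simpa only [Pi.add_apply, Pi.single_apply] using
    div_bernstein_edge_field_general v lam hlam hij
      (add_single_eq_add_single_of_eq_sub hαj hβ) x
end

section
/- Let n ≥ 2, k ≥ 0, 1 ≤ ℓ ≤ n−1, and let r, r' be nonnegative integers with r' ≥ 2r. For every subset f of {0,…,n} with |f| = ℓ+1 define the set M(f) = D(f,r) \ ⋃_{e ⊂ f, |e| = ℓ} D(e,r'). Then for any two distinct subsets f, f̃ of {0,…,n} with |f| = |f̃| = ℓ+1, the sets M(f) and M(f̃) are disjoint. -/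
open scoped BigOperators

/-- The lattice tube `D(f, s)` inside the simplicial lattice `𝕋ⁿ_k`: lattice nodes whose
distance `∑_{i ∉ f} α_i` to the sub-simplex `f` is at most `s`. -/
def latticeTube (n k : ℕ) (f : Finset (Fin (n + 1))) (s : ℕ) : Set (Fin (n + 1) → ℕ) :=
  {α | ∑ i, α i = k ∧ ∑ i ∈ fᶜ, α i ≤ s}

theorem card_inter_lt_card_left {α : Type*} [DecidableEq α] {s t : Finset α}
    (hne : s ≠ t) (hcard : t.card ≤ s.card) : (s ∩ t).card < s.card :=
  Finset.card_lt_card <| inf_lt_left.2 fun hst => hne (Finset.eq_of_subset_of_card_le hst hcard)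

section Tube

variable {n k r s : ℕ} {f g : Finset (Fin (n + 1))}

theorem latticeTube_mono (hfg : f ⊆ g) (hrs : r ≤ s) :
    latticeTube n k f r ⊆ latticeTube n k g s := by
  rintro α ⟨hsum, hdist⟩
  exact ⟨hsum, (Finset.sum_le_sum_of_subset (Finset.compl_subset_compl.2 hfg)).trans
    (hdist.trans hrs)⟩

theorem latticeTube_inter_subset :
    latticeTube n k f r ∩ latticeTube n k g s ⊆ latticeTube n k (f ∩ g) (r + s) := by
  rintro α ⟨⟨hsum, hf⟩, -, hg⟩
  refine ⟨hsum, ?_⟩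
  calc ∑ i ∈ (f ∩ g)ᶜ, α i
      = ∑ i ∈ fᶜ ∪ gᶜ, α i := by rw [Finset.compl_inter]
    _ ≤ ∑ i ∈ fᶜ ∪ gᶜ, α i + ∑ i ∈ fᶜ ∩ gᶜ, α i := Nat.le_add_right _ _
    _ = ∑ i ∈ fᶜ, α i + ∑ i ∈ gᶜ, α i := Finset.sum_union_inter
    _ ≤ r + s := Nat.add_le_add hf hg

end Tube

theorem lattice_tube_difference_disjoint_general {n k l r s r' : ℕ}
    {f g : Finset (Fin (n + 1))} (hfg : (f ∩ g).card ≤ l) (hl : l ≤ f.card) (hr : r + s ≤ r') :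
    Disjoint
      (latticeTube n k f r \
        ⋃ e ∈ {e : Finset (Fin (n + 1)) | e ⊆ f ∧ e.card = l}, latticeTube n k e r')
      (latticeTube n k g s) := by
  obtain ⟨e, hfge, hef, hcard⟩ :=
    Finset.exists_subsuperset_card_eq Finset.inter_subset_left hfg hl
  rw [Set.disjoint_left]
  rintro α ⟨hαf, hα⟩ hαg
  have hαe : α ∈ latticeTube n k e r' :=
    latticeTube_mono hfge hr (latticeTube_inter_subset ⟨hαf, hαg⟩)
  exact hα (Set.mem_biUnion ⟨hef, hcard⟩ hαe)

/-- for `r' ≥ 2r`, the sets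
`D(f,r) \ ⋃_{e ⊂ f, |e| = ℓ} D(e,r')`, over `ℓ`-dimensional sub-simplices `f`
(subsets of cardinality `ℓ+1`), are pairwise disjoint. -/
theorem lattice_tube_difference_disjoint
    (n k : ℕ) (hn : 2 ≤ n) (l r r' : ℕ)
    (hl1 : 1 ≤ l) (hl2 : l ≤ n - 1) (hr : 2 * r ≤ r')
    (f ftl : Finset (Fin (n + 1)))
    (hf : f.card = l + 1) (hftl : ftl.card = l + 1) (hne : f ≠ ftl) :
    Disjoint
      (latticeTube n k f r \
        ⋃ e ∈ {e : Finset (Fin (n + 1)) | e ⊆ f ∧ e.card = l}, latticeTube n k e r')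
      (latticeTube n k ftl r \
        ⋃ e ∈ {e : Finset (Fin (n + 1)) | e ⊆ ftl ∧ e.card = l}, latticeTube n k e r') := by
  have hcard : (f ∩ ftl).card < f.card := card_inter_lt_card_left hne (by rw [hf, hftl])
  exact (lattice_tube_difference_disjoint_general (by omega) (by omega) (by omega)).mono_right
    Set.sdiff_subset
end

section
/- Let k ≥ 0. If u = (u₁, u₂, u₃) is a triple of real polynomials in three variables of total degree at most k satisfying ∂₁u₁ + ∂₂u₂ + ∂₃u₃ = 0, then there exists a triple w = (w₁, w₂, w₃) of real polynomials of total degree at most k+1 with u = curl w. That is, in the polynomial de Rham complex, 𝒫_k(ℝ³;ℝ³) ∩ ker(div) = curl 𝒫_{k+1}(ℝ³;ℝ³). -/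
open scoped BigOperators

/-!
The Poincaré lemma for `(n - 1)`-forms with polynomial coefficients, with its explicit homotopy.
Let `E = ∑ j, X j * ∂ⱼ` be the Euler operator. The divergence of the bivector field `v ∧ x`, taken
row by row, is `(E + n - 1) v - (div v) x`. The operator `E + c` multiplies a monomial of degree
`d` by `d + c`, so for `c > 0` it is inverted, without raising degrees, by dividing that monomial
by `d + c`. This inverse `J c` satisfies `∂ᵢ ∘ J c = J (c + 1) ∘ ∂ᵢ`, hence preserves
divergence-freeness, and `v = J (n - 1) u` gives `u = Div (v ∧ x)` whenever `div u = 0` and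
`n ≥ 2`. In dimension three the row divergence of an alternating matrix is a curl.
-/

section

open MvPolynomial

variable {σ R : Type*} [CommRing R]

section RadialIntegral

variable [Algebra ℚ R]

/-- The formal radial integral `p ↦ ∫₀¹ t ^ (c - 1) * p (t x) dt`, which inverts the operator
`∑ j, X j * pderiv j + c` for `c ≠ 0`. The integral is evaluated monomial by monomial as division
by `degree + c`, so for `c = 0` it sends constants to `0`. -/
noncomputable def radialIntegral (c : ℕ) : MvPolynomial σ R →ₗ[R] MvPolynomial σ R :=
  (basisMonomials σ R).constr R fun m ↦ ((m.degree + c : ℕ) : ℚ)⁻¹ • monomial m 1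

theorem radialIntegral_monomial (c : ℕ) (m : σ →₀ ℕ) (r : R) :
    radialIntegral c (monomial m r) = ((m.degree + c : ℕ) : ℚ)⁻¹ • monomial m r := by
  have hr : monomial m r = r • basisMonomials σ R m := by simp [smul_monomial]
  rw [hr, map_smul, radialIntegral, Module.Basis.constr_basis, smul_comm, coe_basisMonomials]

theorem coeff_radialIntegral (c : ℕ) (p : MvPolynomial σ R) (m : σ →₀ ℕ) :
    coeff m (radialIntegral c p) = ((m.degree + c : ℕ) : ℚ)⁻¹ • coeff m p := by
  classical
  induction p using MvPolynomial.induction_on' with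
  | monomial n r =>
    rw [radialIntegral_monomial, coeff_smul, coeff_monomial]
    split_ifs with hnm
    · rw [hnm]
    · rw [smul_zero, smul_zero]
  | add p q hp hq => rw [map_add, coeff_add, coeff_add, hp, hq, smul_add]

theorem totalDegree_radialIntegral_le (c : ℕ) (p : MvPolynomial σ R) :
    (radialIntegral c p).totalDegree ≤ p.totalDegree := by
  refine totalDegree_le_of_support_subset fun m hm ↦ ?_
  rw [mem_support_iff, coeff_radialIntegral] at hm
  exact mem_support_iff.mpr (right_ne_zero_of_smul hm)

theorem pderiv_radialIntegral (c : ℕ) (i : σ) (p : MvPolynomial σ R) :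
    pderiv i (radialIntegral c p) = radialIntegral (c + 1) (pderiv i p) := by
  ext m
  simp only [coeff_pderiv, coeff_radialIntegral, map_add, Finsupp.degree_single, smul_mul_assoc,
    add_right_comm _ 1 c, add_assoc]

theorem sum_pderiv_radialIntegral_eq_zero [Fintype σ] {u : σ → MvPolynomial σ R}
    (hu : ∑ i, pderiv i (u i) = 0) (c : ℕ) :
    ∑ i, pderiv i (radialIntegral c (u i)) = 0 := by
  simp_rw [pderiv_radialIntegral, ← map_sum, hu, map_zero]

theorem sum_X_mul_pderiv_radialIntegral_add [Fintype σ] {c : ℕ} (hc : c ≠ 0)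
    (p : MvPolynomial σ R) :
    ∑ j, X j * pderiv j (radialIntegral c p) + c • radialIntegral c p = p := by
  induction p using MvPolynomial.induction_on' with
  | monomial m r =>
    have euler : ∑ j, X j * pderiv j (monomial m r) = m.degree • monomial m r :=
      (isHomogeneous_monomial r rfl).sum_X_mul_pderiv
    have hmc : ((m.degree + c : ℕ) : ℚ) ≠ 0 := by positivity
    simp_rw [radialIntegral_monomial, map_rat_smul, mul_smul_comm, ← Finset.smul_sum, euler,
      smul_comm c, ← smul_add, ← add_smul, ← Nat.cast_smul_eq_nsmul ℚ, inv_smul_smul₀ hmc]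
  | add p q hp hq =>
    simp only [map_add, mul_add, Finset.sum_add_distrib, smul_add]
    rw [add_add_add_comm, hp, hq]

end RadialIntegral

/-- The bivector field `v ∧ x`, where `x` is the position vector, as an alternating matrix; in
dimension three it encodes the cross product of `v` and `x`. -/
noncomputable def wedgePosition (v : σ → MvPolynomial σ R) : Matrix σ σ (MvPolynomial σ R) :=
  Matrix.of fun i j ↦ v i * X j - v j * X i

theorem totalDegree_wedgePosition_le {k : ℕ} {v : σ → MvPolynomial σ R}
    (hv : ∀ i, (v i).totalDegree ≤ k) (i j : σ) :
    (wedgePosition v i j).totalDegree ≤ k + 1 := by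
  have hmul (i j : σ) : (v i * X j).totalDegree ≤ k + 1 :=
    (totalDegree_mul _ _).trans (add_le_add (hv i) ((totalDegree_monomial_le _ _).trans (by simp)))
  exact (totalDegree_sub _ _).trans (max_le (hmul i j) (hmul j i))

theorem sum_pderiv_wedgePosition [Fintype σ] (v : σ → MvPolynomial σ R) (i : σ) :
    ∑ j, pderiv j (wedgePosition v i j) =
      ∑ j, X j * pderiv j (v i) + ((Fintype.card σ : MvPolynomial σ R) - 1) * v i -
        X i * ∑ j, pderiv j (v j) := by
  classical
  have hpderiv (j : σ) : pderiv j (wedgePosition v i j) =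
      X j * pderiv j (v i) + v i - X i * pderiv j (v j) - if j = i then v i else 0 := by
    simp only [wedgePosition, Matrix.of_apply, map_sub, pderiv_mul, pderiv_X, Pi.single_apply]
    split_ifs <;> grind
  simp only [hpderiv, Finset.sum_sub_distrib, Finset.sum_add_distrib, ← Finset.mul_sum,
    Finset.sum_const, Finset.card_univ, nsmul_eq_mul, Finset.sum_ite_eq', Finset.mem_univ, if_true]
  ring

theorem exists_alternating_of_sum_pderiv_eq_zero [Algebra ℚ R] [Fintype σ] [Nontrivial σ] {k : ℕ}
    {u : σ → MvPolynomial σ R} (hdeg : ∀ i, (u i).totalDegree ≤ k)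
    (hdiv : ∑ i, pderiv i (u i) = 0) :
    ∃ A : Matrix σ σ (MvPolynomial σ R),
      (∀ i, A i i = 0) ∧ (∀ i j, A j i = -A i j) ∧ (∀ i j, (A i j).totalDegree ≤ k + 1) ∧
        ∀ i, u i = ∑ j, pderiv j (A i j) := by
  have hcard_gt := Fintype.one_lt_card (α := σ)
  obtain ⟨c, hc, hcard⟩ : ∃ c, c ≠ 0 ∧ Fintype.card σ = c + 1 :=
    ⟨Fintype.card σ - 1, by lia, by lia⟩
  let v (i : σ) := radialIntegral c (u i)
  have hv_deg (i : σ) : (v i).totalDegree ≤ k :=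
    (totalDegree_radialIntegral_le _ _).trans (hdeg i)
  have hv_div : ∑ i, pderiv i (v i) = 0 := sum_pderiv_radialIntegral_eq_zero hdiv _
  have hv_euler (i : σ) : ∑ j, X j * pderiv j (v i) + c • v i = u i :=
    sum_X_mul_pderiv_radialIntegral_add hc (u i)
  refine ⟨wedgePosition v, fun i ↦ sub_self _, fun i j ↦ (neg_sub _ _).symm,
    totalDegree_wedgePosition_le hv_deg, fun i ↦ ?_⟩
  rw [sum_pderiv_wedgePosition, hv_div, ← hv_euler, hcard, nsmul_eq_mul]
  push_cast
  ring

theorem divfree_polynomial_is_curl_general [Algebra ℚ R] (k : ℕ)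
    (u : Fin 3 → MvPolynomial (Fin 3) R) (hdeg : ∀ i, (u i).totalDegree ≤ k)
    (hdiv : ∑ i, pderiv i (u i) = 0) :
    ∃ w : Fin 3 → MvPolynomial (Fin 3) R,
      (∀ i, (w i).totalDegree ≤ k + 1) ∧
      u 0 = pderiv 1 (w 2) - pderiv 2 (w 1) ∧
      u 1 = pderiv 2 (w 0) - pderiv 0 (w 2) ∧
      u 2 = pderiv 0 (w 1) - pderiv 1 (w 0) := by
  obtain ⟨A, hdiag, hskew, hA_deg, hu⟩ := exists_alternating_of_sum_pderiv_eq_zero hdeg hdiv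
  refine ⟨![A 1 2, A 2 0, A 0 1], ?_, ?_, ?_, ?_⟩
  · intro i
    fin_cases i <;> exact hA_deg _ _
  · simp [hu, Fin.sum_univ_three, hdiag, hskew 2 0, sub_eq_add_neg]
  · simp [hu, Fin.sum_univ_three, hdiag, hskew 0 1, sub_eq_add_neg, add_comm]
  · simp [hu, Fin.sum_univ_three, hdiag, hskew 1 2, sub_eq_add_neg]

end

/-- a divergence-free polynomial vector field of degree at most `k` is the
curl of a polynomial vector field of degree at most `k+1`:
`𝒫_k(ℝ³;ℝ³) ∩ ker(div) = curl 𝒫_{k+1}(ℝ³;ℝ³)`. -/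
theorem divfree_polynomial_is_curl
    (k : ℕ) (u : Fin 3 → MvPolynomial (Fin 3) ℝ)
    (hdeg : ∀ i, (u i).totalDegree ≤ k)
    (hdiv : ∑ i, MvPolynomial.pderiv i (u i) = 0) :
    ∃ w : Fin 3 → MvPolynomial (Fin 3) ℝ,
      (∀ i, (w i).totalDegree ≤ k + 1) ∧
      u 0 = MvPolynomial.pderiv 1 (w 2) - MvPolynomial.pderiv 2 (w 1) ∧
      u 1 = MvPolynomial.pderiv 2 (w 0) - MvPolynomial.pderiv 0 (w 2) ∧
      u 2 = MvPolynomial.pderiv 0 (w 1) - MvPolynomial.pderiv 1 (w 0) :=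
  divfree_polynomial_is_curl_general k u hdeg hdiv
end
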